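/- Fix positive integers c and n. For every admissible pair (A,B) there exists a polynomial P_{A,B} ∈ ℤ[X₁,…,Xₙ] such that for all positive integers x₁,…,xₙ satisfying the genericity condition Σ_{i∈I} xᵢ ≠ Σ_{j∈J} xⱼ for all pairs of distinct subsets I, J ⊆ {1,…,n}, the multiplicity of the lattice path γ(A,B) in the rectangle of width c and height d = x₁+⋯+xₙ with boundary data μ₁ = (c), μ₂ = (1,…,1) (c ones), ν₁ = (x₁,…,xₙ), ν₂ = (d) satisfies mult(γ(A,B)) = P_{A,B}(x₁,…,xₙ). -/

import Mathlib

open Classical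

noncomputable section

namespace TropPaths

/-- Lattice points of the plane. -/
abbrev Pt := ℤ × ℤ

/-- The order on `ℤ²` induced by `λ(x,y) = x - εy` for a small irrational `ε > 0`:
`p ≺ q` iff `p₁ < q₁`, or (`p₁ = q₁` and `p₂ > q₂`). -/
def lamLT (p q : Pt) : Prop := p.1 < q.1 ∨ (p.1 = q.1 ∧ q.2 < p.2)

/-- A lattice path, recorded as the list of its points, is `λ`-increasing. -/
def Increasing (γ : List Pt) : Prop := List.Chain' lamLT γ

/-- The determinant of two vectors in `ℤ²`. -/
def det (u v : Pt) : ℤ := u.1 * v.2 - u.2 * v.1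

/-- The `k`-th point of a path (junk value out of range). -/
def pt (γ : List Pt) (k : ℕ) : Pt := γ.getD k (0, 0)

/-- The `k`-th step vector of a path. -/
def stepAt (γ : List Pt) (k : ℕ) : Pt := pt γ (k + 1) - pt γ k

/-- The list of all step vectors of a path. -/
def steps (γ : List Pt) : List Pt := List.zipWith (fun a b => b - a) γ γ.tail

/-- The multiset of down steps `(0,-s)`, `s > 0`, of a path. -/
def downSteps (γ : List Pt) : Multiset Pt :=
  Multiset.filter (fun v => v.1 = 0 ∧ v.2 < 0) (steps γ : Multiset Pt)

/-- The multiset of up-right steps of a path. -/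
def upRightSteps (γ : List Pt) : Multiset Pt :=
  Multiset.filter (fun v => 0 < v.1 ∧ 0 < v.2) (steps γ : Multiset Pt)

/-- The path makes a turn of sign `s` at the (interior) index `k`; for left turns
`s = (0 < ·)`, for right turns `s = (· < 0)`. -/
def TurnAt (s : ℤ → Prop) (γ : List Pt) (k : ℕ) : Prop :=
  0 < k ∧ k + 1 < γ.length ∧ s (det (pt γ k - pt γ (k - 1)) (pt γ (k + 1) - pt γ k))

/-- `k` is the first turn of sign `s` of the path. -/
def FirstTurn (s : ℤ → Prop) (γ : List Pt) (k : ℕ) : Prop :=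
  TurnAt s γ k ∧ ∀ j, TurnAt s γ j → k ≤ j

/-- Twice the area of the triangle with vertices `γ(k-1), γ(k), γ(k+1)`. -/
def triArea2 (γ : List Pt) (k : ℕ) : ℕ :=
  (det (pt γ k - pt γ (k - 1)) (pt γ (k + 1) - pt γ k)).natAbs

/-- The path obtained by cutting the corner at index `k`, i.e. deleting the point `γ(k)`. -/
def cut (γ : List Pt) (k : ℕ) : List Pt := γ.eraseIdx k

/-- The path obtained by completing the parallelogram at index `k`, i.e. replacing
`γ(k)` by `γ(k-1) + γ(k+1) - γ(k)`. -/
def push (γ : List Pt) (k : ℕ) : List Pt :=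
  γ.set k (pt γ (k - 1) + pt γ (k + 1) - pt γ k)

/-- All points of the path lie in `Δ`. -/
def Inside (Δ : Set Pt) (γ : List Pt) : Prop := ∀ z ∈ γ, z ∈ Δ

/-- Mikhalkin's multiplicity recursion, as a functional relation: `MultRel Δ Init s γ m`
means that the recursion (performed always at the *first* turn of sign `s`) assigns the
multiplicity `m` to the path `γ`.  Here `Δ` is the set of lattice points of the polygon,
`Init` the set of initial paths (of multiplicity `1`), and `s` the turn sign
(`0 < ·` for left turns / `mult₊`, `· < 0` for right turns / `mult₋`). -/
inductive MultRel (Δ : Set Pt) (Init : List Pt → Prop) (s : ℤ → Prop) : List Pt → ℕ → Prop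
  | init {γ : List Pt} : Init γ → MultRel Δ Init s γ 1
  | noTurn {γ : List Pt} : ¬Init γ → (∀ k, ¬TurnAt s γ k) → MultRel Δ Init s γ 0
  | stepIn {γ : List Pt} {k m' m'' : ℕ} : ¬Init γ → FirstTurn s γ k →
      Inside Δ (push γ k) → MultRel Δ Init s (cut γ k) m' →
      MultRel Δ Init s (push γ k) m'' →
      MultRel Δ Init s γ (triArea2 γ k * m' + m'')
  | stepOut {γ : List Pt} {k m' : ℕ} : ¬Init γ → FirstTurn s γ k →
      ¬Inside Δ (push γ k) → MultRel Δ Init s (cut γ k) m' →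
      MultRel Δ Init s γ (triArea2 γ k * m')

/-- The multiplicity function determined by Mikhalkin's recursion. -/
def multOf (Δ : Set Pt) (Init : List Pt → Prop) (s : ℤ → Prop) (γ : List Pt) : ℕ :=
  if h : ∃ m, MultRel Δ Init s γ m then h.choose else 0

/-- `γ ≺ δ`: the path `δ` is obtained from `γ` by finitely many steps of the multiplicity
recursion (each step cuts the corner at the first turn of sign `s`, or completes the
parallelogram there). -/
inductive Reaches (Δ : Set Pt) (Init : List Pt → Prop) (s : ℤ → Prop) : List Pt → List Pt → Prop
  | refl (γ : List Pt) : Reaches Δ Init s γ γ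
  | cutStep {γ δ : List Pt} {k : ℕ} : ¬Init γ → FirstTurn s γ k →
      Reaches Δ Init s (cut γ k) δ → Reaches Δ Init s γ δ
  | pushStep {γ δ : List Pt} {k : ℕ} : ¬Init γ → FirstTurn s γ k →
      Inside Δ (push γ k) → Reaches Δ Init s (push γ k) δ → Reaches Δ Init s γ δ

/-- The lattice path starting at `p` with the given list of step vectors. -/
def pathFrom : Pt → List Pt → List Pt
  | p, [] => [p]
  | p, v :: vs => p :: pathFrom (p + v) vs

/-- Horizontal (rightward) steps of the given sizes. -/
def hSteps (l : List ℕ) : List Pt := l.map fun k => ((k : ℤ), 0)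

/-- Vertical downward steps of the given sizes. -/
def dSteps (l : List ℕ) : List Pt := l.map fun k => ((0 : ℤ), -(k : ℤ))

/-- A multiset of positive integers is a partition of `t`. -/
def IsPartition (m : Multiset ℕ) (t : ℕ) : Prop := (∀ k ∈ m, 0 < k) ∧ m.sum = t

/-! ## The rectangle `[0,c] × [0,d]` -/

/-- The lattice points of the rectangle with vertices `(0,0), (c,0), (0,d), (c,d)`. -/
def rect (c d : ℕ) : Set Pt := {z | 0 ≤ z.1 ∧ z.1 ≤ (c : ℤ) ∧ 0 ≤ z.2 ∧ z.2 ≤ (d : ℤ)}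

/-- `β₊`-initial paths of the rectangle: from `p = (0,d)` clockwise along the top edge with
step sizes the parts of `μ₂` and then down the right edge with step sizes the parts of `ν₂`. -/
def InitPlusRect (d : ℕ) (μ₂ ν₂ : Multiset ℕ) (γ : List Pt) : Prop :=
  ∃ s t : List ℕ, (s : Multiset ℕ) = μ₂ ∧ (t : Multiset ℕ) = ν₂ ∧
    γ = pathFrom (0, (d : ℤ)) (hSteps s ++ dSteps t)

/-- `β₋`-initial paths of the rectangle: from `p = (0,d)` counterclockwise down the left edge
with step sizes the parts of `ν₁` and then along the bottom edge with step sizes the parts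
of `μ₁`. -/
def InitMinusRect (d : ℕ) (μ₁ ν₁ : Multiset ℕ) (γ : List Pt) : Prop :=
  ∃ s t : List ℕ, (s : Multiset ℕ) = ν₁ ∧ (t : Multiset ℕ) = μ₁ ∧
    γ = pathFrom (0, (d : ℤ)) (dSteps s ++ hSteps t)

/-- `mult₊` for the rectangle with boundary data `(μ₁, μ₂, ν₁, ν₂)`. -/
def multPlusRect (c d : ℕ) (μ₂ ν₂ : Multiset ℕ) : List Pt → ℕ :=
  multOf (rect c d) (InitPlusRect d μ₂ ν₂) (fun x => 0 < x)

/-- `mult₋` for the rectangle with boundary data `(μ₁, μ₂, ν₁, ν₂)`. -/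
def multMinusRect (c d : ℕ) (μ₁ ν₁ : Multiset ℕ) : List Pt → ℕ :=
  multOf (rect c d) (InitMinusRect d μ₁ ν₁) (fun x => x < 0)

/-- `mult = mult₊ · mult₋` for the rectangle with boundary data `(μ₁, μ₂, ν₁, ν₂)`. -/
def multRect (c d : ℕ) (μ₁ μ₂ ν₁ ν₂ : Multiset ℕ) (γ : List Pt) : ℕ :=
  multPlusRect c d μ₂ ν₂ γ * multMinusRect c d μ₁ ν₁ γ

/-- A `λ`-increasing lattice path from `(0,d)` to `(c,0)` contained in the rectangle. -/
def IsPathRect (c d : ℕ) (γ : List Pt) : Prop :=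
  Increasing γ ∧ γ.head? = some (0, (d : ℤ)) ∧ γ.getLast? = some ((c : ℤ), 0) ∧
    Inside (rect c d) γ

/-- The genericity condition: all subset sums of the `xᵢ` are distinct. -/
def Generic {n : ℕ} (x : Fin n → ℕ) : Prop :=
  ∀ I J : Finset (Fin n), I ≠ J → ∑ i ∈ I, x i ≠ ∑ j ∈ J, x j

/-! ## Admissible pairs and the paths `γ(A,B)` -/

/-- An admissible pair `(A,B)`: pairwise disjoint sequences `A₀,…,A_{c-1}` in `{1,…,n}`
whose entries together partition `{1,…,n}`, and pairwise disjoint subsets `B₀,…,B_{c-1}`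
with union `{1,…,n}`, such that `B₀ ≠ ∅` and
`B_k ⊆ (A₀ ∪ ⋯ ∪ A_k) \ (B₀ ∪ ⋯ ∪ B_{k-1})` for all `k`. -/
def IsAdmissible {c n : ℕ} (A : Fin c → List (Fin n)) (B : Fin c → Finset (Fin n)) : Prop :=
  ((List.ofFn A).flatten : Multiset (Fin n)) = (Finset.univ : Finset (Fin n)).val ∧
  (∀ i : Fin n, ∃! k : Fin c, i ∈ B k) ∧
  (∀ k : Fin c, (k : ℕ) = 0 → (B k).Nonempty) ∧
  ∀ k : Fin c, B k ⊆
    (Finset.univ.filter fun i => ∃ j : Fin c, j ≤ k ∧ i ∈ A j) \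
      (Finset.univ.filter fun i => ∃ j : Fin c, j < k ∧ i ∈ B j)

/-- The steps of `γ(A,B)` in the column `x = k`: down steps of sizes `xᵢ`, `i ∈ A_k`, in
order, followed by the step `(1, Σ_{i ∈ B_k} xᵢ)` to the next column. -/
def colSteps {c n : ℕ} (x : Fin n → ℕ) (A : Fin c → List (Fin n))
    (B : Fin c → Finset (Fin n)) (k : Fin c) : List Pt :=
  ((A k).map fun i => ((0 : ℤ), -(x i : ℤ))) ++ [((1 : ℤ), ∑ i ∈ B k, (x i : ℤ))]

/-- The lattice path `γ(A,B)` associated to an admissible pair, from `(0,d)` to `(c,0)`,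
whose last step is the full right edge. -/
def gammaAB {c n : ℕ} (x : Fin n → ℕ) (A : Fin c → List (Fin n))
    (B : Fin c → Finset (Fin n)) : List Pt :=
  pathFrom (0, ((∑ i, x i : ℕ) : ℤ))
    ((List.ofFn (colSteps x A B)).flatten ++ [((0 : ℤ), -((∑ i, x i : ℕ) : ℤ))])

/-! ## The trapezoid of Lemma 4.? -/

/-- The lattice points of the trapezoid with vertices `(0,0), (0,a), (1,a), (1,b)`. -/
def trap (a b : ℕ) : Set Pt :=
  {z | 0 ≤ z.1 ∧ z.1 ≤ 1 ∧ (b : ℤ) * z.1 ≤ z.2 ∧ z.2 ≤ (a : ℤ)}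

/-- `β₊`-initial paths of the trapezoid: one step of lattice length 1 along the top edge,
then down the right edge with step sizes the parts of `βright`. -/
def InitPlusTrap (a : ℕ) (βright : Multiset ℕ) (γ : List Pt) : Prop :=
  ∃ t : List ℕ, (t : Multiset ℕ) = βright ∧
    γ = pathFrom (0, (a : ℤ)) (((1 : ℤ), (0 : ℤ)) :: dSteps t)

/-! ## Automorphisms of a partition -/

/-- `|Aut ν| = ∏_k m_k(ν)!` where `m_k(ν)` is the number of parts of `ν` equal to `k`. -/
def autCard (m : Multiset ℕ) : ℕ :=
  (m.dedup.map fun k => (m.count k).factorial).prod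

/-!
Along the recursion for `mult₊` the columns are swept onto the top edge one after another. In each
column every available down step is either cut off against the step to the right or passed on to
the next column, and by genericity the only choice that survives is to cut exactly those with index
in `B_k`. Twice the area of a cut triangle is the size of its down step, so `mult₊ = ∏ xᵢ`.

In the recursion for `mult₋`, cutting a corner at a vertical step destroys a down step whose size
cannot reappear, and the path never becomes initial. Hence the down steps merely move to the left
edge, only the corners between non-vertical steps contribute, and `mult₋` is the product over these
steps of the determinant of the sum of all later ones, the right edge included, with the step.

Both factors are polynomials in `x`.
-/

/-! ### Paths and their step lists -/

theorem length_pathFrom (p : Pt) (L : List Pt) : (pathFrom p L).length = L.length + 1 := by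
  induction L generalizing p with
  | nil => rfl
  | cons v L ih => simp [pathFrom, ih]

theorem pt_pathFrom_zero (p : Pt) (L : List Pt) : pt (pathFrom p L) 0 = p := by
  cases L <;> rfl

theorem pt_pathFrom_cons_succ (p v : Pt) (L : List Pt) (k : ℕ) :
    pt (pathFrom p (v :: L)) (k + 1) = pt (pathFrom (p + v) L) k := by
  simp [pathFrom, pt]

theorem stepAt_pathFrom (p : Pt) (L : List Pt) (k : ℕ) (hk : k < L.length) :
    stepAt (pathFrom p L) k = L[k] := by
  induction L generalizing p k with
  | nil => simp at hk
  | cons v L ih =>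
    cases k with
    | zero => simp [stepAt, pt_pathFrom_cons_succ, pt_pathFrom_zero]
    | succ k => simpa [stepAt, pt_pathFrom_cons_succ] using ih (p + v) k (by simpa using hk)

theorem pathFrom_injective (p : Pt) : Function.Injective (pathFrom p) := by
  intro L L' h
  have hlen : L.length = L'.length := by simpa [length_pathFrom] using congrArg List.length h
  refine List.ext_getElem hlen fun k hk hk' => ?_
  rw [← stepAt_pathFrom p L k hk, ← stepAt_pathFrom p L' k hk', h]

theorem turnAt_pathFrom_succ_iff {s : ℤ → Prop} {p : Pt} {L : List Pt} {k : ℕ} :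
    TurnAt s (pathFrom p L) (k + 1) ↔ ∃ h : k + 1 < L.length, s (det L[k] L[k + 1]) := by
  have hdet (h : k + 1 < L.length) :
      det (stepAt (pathFrom p L) k) (stepAt (pathFrom p L) (k + 1)) = det L[k] L[k + 1] := by
    rw [stepAt_pathFrom p L k (by lia), stepAt_pathFrom p L (k + 1) h]
  constructor
  · rintro ⟨-, hk, hs⟩
    have h : k + 1 < L.length := by simpa [length_pathFrom] using hk
    exact ⟨h, hdet h ▸ hs⟩
  · rintro ⟨h, hs⟩
    exact ⟨k.succ_pos, by simpa [length_pathFrom] using h, (hdet h).symm ▸ hs⟩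

theorem triArea2_pathFrom (p : Pt) (P Q : List Pt) (a w : Pt) :
    triArea2 (pathFrom p (P ++ a :: w :: Q)) (P.length + 1) = (det a w).natAbs := by
  change (det (stepAt _ P.length) (stepAt _ (P.length + 1))).natAbs = _
  simp [stepAt_pathFrom]

theorem cut_pathFrom (p : Pt) (P Q : List Pt) (a w : Pt) :
    cut (pathFrom p (P ++ a :: w :: Q)) (P.length + 1) = pathFrom p (P ++ (a + w) :: Q) := by
  induction P generalizing p with
  | nil => simp [cut, pathFrom, add_assoc]
  | cons v P ih => simpa [cut, pathFrom] using ih (p + v)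

theorem push_pathFrom (p : Pt) (P Q : List Pt) (a w : Pt) :
    push (pathFrom p (P ++ a :: w :: Q)) (P.length + 1) = pathFrom p (P ++ w :: a :: Q) := by
  induction P generalizing p with
  | nil =>
    simp only [push, List.nil_append, List.length_nil, zero_add, Nat.sub_self, pt_pathFrom_zero,
      pt_pathFrom_cons_succ _ _ _ 0, pt_pathFrom_cons_succ _ _ _ 1]
    simp [pathFrom, add_right_comm p a w, add_sub_right_comm (p + w)]
  | cons v P ih =>
    have h := ih (p + v)
    simp only [push, Nat.add_sub_cancel] at h
    simp only [push, List.cons_append, List.length_cons, Nat.add_sub_cancel,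
      pt_pathFrom_cons_succ]
    simp only [pathFrom, List.set_cons_succ, h]

/-! ### Corners -/

/-- A list of steps is free of turns of sign `s` if no two consecutive steps make such a turn. -/
def NoTurn (s : ℤ → Prop) (L : List Pt) : Prop := List.IsChain (fun u v => ¬ s (det u v)) L

theorem NoTurn.not_turnAt {s : ℤ → Prop} {L : List Pt} (h : NoTurn s L) (p : Pt) (k : ℕ) :
    ¬ TurnAt s (pathFrom p L) k := by
  cases k with
  | zero => exact fun hk => hk.1.false
  | succ k =>
    rw [turnAt_pathFrom_succ_iff]
    exact fun ⟨hk, hs⟩ => List.isChain_iff_getElem.mp h k hk hs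

theorem firstTurn_pathFrom {s : ℤ → Prop} (p : Pt) {P Q : List Pt} {a w : Pt}
    (hPa : NoTurn s (P ++ [a])) (hs : s (det a w)) :
    FirstTurn s (pathFrom p (P ++ a :: w :: Q)) (P.length + 1) := by
  refine ⟨turnAt_pathFrom_succ_iff.mpr ⟨by simp, by simpa using hs⟩, fun j hj => ?_⟩
  by_contra! hlt
  obtain _ | j := j
  · exact hj.1.false
  obtain ⟨_, hj⟩ := turnAt_pathFrom_succ_iff.mp hj
  have hj' : j + 1 < (P ++ [a]).length := by simpa using hlt
  have hget : ∀ i (hi : i < (P ++ a :: w :: Q).length) (hi' : i < (P ++ [a]).length),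
      (P ++ a :: w :: Q)[i] = (P ++ [a])[i] := by grind
  rw [hget j _ (by lia), hget (j + 1) _ hj'] at hj
  exact List.isChain_iff_getElem.mp hPa j hj' hj

theorem noTurn_or_exists_corner (s : ℤ → Prop) (L : List Pt) :
    NoTurn s L ∨
      ∃ P a w Q, L = P ++ a :: w :: Q ∧ NoTurn s (P ++ [a]) ∧ s (det a w) := by
  induction L using List.reverseRecOn with
  | nil => exact .inl .nil
  | append_singleton L w ih =>
    obtain h | ⟨P, a, v, Q, rfl, hPa, hs⟩ := ih
    · obtain rfl | ⟨P, a, rfl⟩ := L.eq_nil_or_concat'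
      · exact .inl (.singleton w)
      by_cases hs : s (det a w)
      · exact .inr ⟨P, a, w, [], by simp, h, hs⟩
      · refine .inl (List.IsChain.append h (.singleton w) ?_)
        simpa using hs
    · exact .inr ⟨P, a, v, Q ++ [w], by simp, hPa, hs⟩

/-- The number of pairs of steps, not necessarily consecutive, that turn with sign `s`: it drops
when a parallelogram is completed, which is why Mikhalkin's recursion terminates. -/
def inversions (s : ℤ → Prop) : List Pt → ℕ
  | [] => 0
  | v :: L => L.countP (fun u => s (det v u)) + inversions s L

theorem det_swap (u v : Pt) : det v u = -det u v := by
  unfold det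
  ring

theorem inversions_swap_lt {s : ℤ → Prop} (P Q : List Pt) {a w : Pt} (h : s (det a w))
    (h' : ¬ s (det w a)) :
    inversions s (P ++ w :: a :: Q) < inversions s (P ++ a :: w :: Q) := by
  induction P with
  | nil => simp [inversions, h, h']; lia
  | cons v P ih =>
    have hperm := ((List.Perm.swap w a Q).append_left P).countP_eq fun u => s (det v u)
    simp only [List.cons_append, inversions, hperm]
    lia

theorem corner_induction {s : ℤ → Prop} (hs : ∀ z, s z → ¬ s (-z)) {C : List Pt → Prop}
    (ih : ∀ L, (∀ P a w Q, L = P ++ a :: w :: Q → s (det a w) →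
      C (P ++ (a + w) :: Q) ∧ C (P ++ w :: a :: Q)) → C L) (L : List Pt) : C L := by
  induction h : toLex (L.length, inversions s L) using WellFoundedLT.induction generalizing L with
  | ind _ ih_lt
  subst h
  refine ih L fun P a w Q hL hdet => ⟨ih_lt _ ?_ _ rfl, ih_lt _ ?_ _ rfl⟩
  · simp [Prod.Lex.toLex_lt_toLex, hL]
  · simpa [Prod.Lex.toLex_lt_toLex, hL] using inversions_swap_lt P Q hdet (det_swap a w ▸ hs _ hdet)

/-! ### Mikhalkin's recursion on step lists -/

section MultOf

variable {Δ : Set Pt} {Init : List Pt → Prop} {s : ℤ → Prop}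

theorem FirstTurn.unique {γ : List Pt} {k k' : ℕ} (h : FirstTurn s γ k) (h' : FirstTurn s γ k') :
    k = k' :=
  le_antisymm (h.2 _ h'.1) (h'.2 _ h.1)

theorem MultRel.unique {γ : List Pt} {m m' : ℕ} (h : MultRel Δ Init s γ m)
    (h' : MultRel Δ Init s γ m') : m = m' := by
  induction h generalizing m' with
  | init hi => cases h' <;> first | rfl | contradiction
  | noTurn hi hno =>
    cases h' with
    | init => contradiction
    | noTurn => rfl
    | stepIn _ hf | stepOut _ hf => exact (hno _ hf.1).elim
  | stepIn hi hf hin _ _ ih_cut ih_push =>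
    cases h' with
    | init => contradiction
    | noTurn _ hno => exact (hno _ hf.1).elim
    | stepIn _ hf' _ h_cut h_push =>
      obtain rfl := hf.unique hf'
      rw [ih_cut h_cut, ih_push h_push]
    | stepOut _ hf' hout => exact absurd (hf.unique hf' ▸ hin) hout
  | stepOut hi hf hout _ ih_cut =>
    cases h' with
    | init => contradiction
    | noTurn _ hno => exact (hno _ hf.1).elim
    | stepIn _ hf' hin => exact absurd (hf.unique hf' ▸ hin) hout
    | stepOut _ hf' _ h_cut =>
      obtain rfl := hf.unique hf'
      rw [ih_cut h_cut]

theorem MultRel.multOf_eq {γ : List Pt} {m : ℕ} (h : MultRel Δ Init s γ m) :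
    multOf Δ Init s γ = m := by
  have hex : ∃ m, MultRel Δ Init s γ m := ⟨m, h⟩
  rw [multOf, dif_pos hex]
  exact hex.choose_spec.unique h

theorem multOf_eq_one {γ : List Pt} (h : Init γ) : multOf Δ Init s γ = 1 :=
  (MultRel.init h).multOf_eq

theorem NoTurn.multOf_eq_zero {p : Pt} {L : List Pt} (h : NoTurn s L)
    (hL : ¬ Init (pathFrom p L)) : multOf Δ Init s (pathFrom p L) = 0 :=
  (MultRel.noTurn hL (h.not_turnAt p)).multOf_eq

theorem multRel_multOf (hs : ∀ z, s z → ¬ s (-z)) (p : Pt) (L : List Pt) :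
    MultRel Δ Init s (pathFrom p L) (multOf Δ Init s (pathFrom p L)) := by
  suffices h : ∃ m, MultRel Δ Init s (pathFrom p L) m by
    obtain ⟨m, h⟩ := h
    rwa [h.multOf_eq]
  induction L using corner_induction hs with | ih L ih
  by_cases hi : Init (pathFrom p L)
  · exact ⟨1, .init hi⟩
  obtain h | ⟨P, a, w, Q, rfl, hPa, hdet⟩ := noTurn_or_exists_corner s L
  · exact ⟨0, .noTurn hi (h.not_turnAt p)⟩
  obtain ⟨⟨m', h_cut⟩, ⟨m'', h_push⟩⟩ := ih P a w Q rfl hdet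
  rw [← cut_pathFrom] at h_cut
  rw [← push_pathFrom] at h_push
  have hf := firstTurn_pathFrom p (Q := Q) hPa hdet
  by_cases hin : Inside Δ (push (pathFrom p (P ++ a :: w :: Q)) (P.length + 1))
  · exact ⟨_, .stepIn hi hf hin h_cut h_push⟩
  · exact ⟨_, .stepOut hi hf hin h_cut⟩

theorem multOf_corner (hs : ∀ z, s z → ¬ s (-z)) {p : Pt} {P Q : List Pt} {a w : Pt}
    (hi : ¬ Init (pathFrom p (P ++ a :: w :: Q))) (hPa : NoTurn s (P ++ [a]))
    (hdet : s (det a w)) :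
    multOf Δ Init s (pathFrom p (P ++ a :: w :: Q)) =
      (det a w).natAbs * multOf Δ Init s (pathFrom p (P ++ (a + w) :: Q)) +
        if Inside Δ (pathFrom p (P ++ w :: a :: Q)) then
          multOf Δ Init s (pathFrom p (P ++ w :: a :: Q)) else 0 := by
  have hf := firstTurn_pathFrom p (Q := Q) hPa hdet
  have h_cut := multRel_multOf (Δ := Δ) (Init := Init) hs p (P ++ (a + w) :: Q)
  have h_push := multRel_multOf (Δ := Δ) (Init := Init) hs p (P ++ w :: a :: Q)
  rw [← triArea2_pathFrom p P Q]
  rw [← cut_pathFrom] at h_cut ⊢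
  split_ifs with hin
  · have h := (MultRel.stepIn hi hf (push_pathFrom p P Q a w ▸ hin) h_cut
      (push_pathFrom p P Q a w ▸ h_push)).multOf_eq
    rwa [push_pathFrom] at h
  · exact (MultRel.stepOut hi hf (push_pathFrom p P Q a w ▸ hin) h_cut).multOf_eq

theorem multOf_eq_zero_of_invariant (hs : ∀ z, s z → ¬ s (-z)) (p : Pt) {C : List Pt → Prop}
    (not_init : ∀ L, C L → ¬ Init (pathFrom p L))
    (move : ∀ P a w Q, s (det a w) → C (P ++ a :: w :: Q) →
      C (P ++ (a + w) :: Q) ∧ C (P ++ w :: a :: Q)) {L : List Pt} (hL : C L) :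
    multOf Δ Init s (pathFrom p L) = 0 := by
  induction L using corner_induction hs with | ih L ih
  obtain h | ⟨P, a, w, Q, rfl, hPa, hdet⟩ := noTurn_or_exists_corner s L
  · exact h.multOf_eq_zero (not_init L hL)
  obtain ⟨ih_cut, ih_push⟩ := ih P a w Q rfl hdet
  obtain ⟨h_cut, h_push⟩ := move P a w Q hdet hL
  rw [multOf_corner hs (not_init _ hL) hPa hdet, ih_cut h_cut, ih_push h_push, ite_self, mul_zero]

end MultOf

section Inside

variable {Δ : Set Pt} {p : Pt}

theorem inside_pathFrom_nil : Inside Δ (pathFrom p []) ↔ p ∈ Δ := by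
  simp [Inside, pathFrom]

theorem inside_pathFrom_cons {v : Pt} {L : List Pt} :
    Inside Δ (pathFrom p (v :: L)) ↔ p ∈ Δ ∧ Inside Δ (pathFrom (p + v) L) := by
  simp [Inside, pathFrom]

theorem Inside.start_mem {L : List Pt} (h : Inside Δ (pathFrom p L)) : p ∈ Δ := by
  cases L with
  | nil => exact inside_pathFrom_nil.mp h
  | cons v L => exact (inside_pathFrom_cons.mp h).1

theorem inside_pathFrom_append {L L' : List Pt} :
    Inside Δ (pathFrom p (L ++ L')) ↔
      Inside Δ (pathFrom p L) ∧ Inside Δ (pathFrom (p + L.sum) L') := by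
  induction L generalizing p with
  | nil => simpa [inside_pathFrom_nil] using Inside.start_mem
  | cons v L ih => simp [inside_pathFrom_cons, ih, and_assoc, add_assoc]

theorem Inside.merge {P Q : List Pt} {a w : Pt}
    (h : Inside Δ (pathFrom p (P ++ a :: w :: Q))) :
    Inside Δ (pathFrom p (P ++ (a + w) :: Q)) := by
  rw [inside_pathFrom_append, inside_pathFrom_cons] at h ⊢
  exact ⟨h.1, h.2.1, by simpa [add_assoc] using (inside_pathFrom_cons.mp h.2.2).2⟩

theorem Inside.swap_iff {P Q : List Pt} {a w : Pt}
    (h : Inside Δ (pathFrom p (P ++ a :: w :: Q))) :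
    Inside Δ (pathFrom p (P ++ w :: a :: Q)) ↔ p + P.sum + w ∈ Δ := by
  simp only [inside_pathFrom_append, inside_pathFrom_cons] at h ⊢
  obtain ⟨hP, hp, -, hQ⟩ := h
  rw [add_right_comm] at hQ
  simp [hP, hp, hQ]

end Inside

theorem inside_rect_of_monotone {c d : ℕ} {p : Pt} {L : List Pt}
    (hL : ∀ v ∈ L, 0 ≤ v.1 ∧ v.2 ≤ 0) (hp : p ∈ rect c d) (hpL : p + L.sum ∈ rect c d) :
    Inside (rect c d) (pathFrom p L) := by
  induction L generalizing p with
  | nil => exact inside_pathFrom_nil.mpr hp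
  | cons v L ih =>
    obtain ⟨hv, hL⟩ := List.forall_mem_cons.mp hL
    rw [List.sum_cons, ← add_assoc] at hpL
    have hsum : 0 ≤ L.sum.1 ∧ L.sum.2 ≤ 0 :=
      List.sum_induction (fun v : Pt => 0 ≤ v.1 ∧ v.2 ≤ 0)
        (fun _ _ hu hv => ⟨add_nonneg hu.1 hv.1, add_nonpos hu.2 hv.2⟩) ⟨le_rfl, le_rfl⟩ hL
    refine inside_pathFrom_cons.mpr ⟨hp, ih hL ?_ hpL⟩
    simp only [rect, Set.mem_ofPred_eq, Prod.fst_add, Prod.snd_add] at hp hpL ⊢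
    lia

/-! ### Nested determinants -/

section NestedDet

variable {R S : Type*} [CommRing R] [CommRing S]

/-- The product over the steps `v` of `l` of the determinant of the sum of everything after `v`,
the final step `t` included, with `v`. This is the negative multiplicity of a path whose
non-vertical steps are `l` and whose last step is `t`; it is defined over any commutative ring so
that it can also be read as a polynomial. -/
def nestedDet : List (R × R) → R × R → R
  | [], _ => 1
  | v :: l, t => (v.2 * (l.sum + t).1 - v.1 * (l.sum + t).2) * nestedDet l t

theorem nestedDet_concat (l : List (R × R)) (u t : R × R) :
    nestedDet (l ++ [u]) t = (u.2 * t.1 - u.1 * t.2) * nestedDet l (u + t) := by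
  induction l with
  | nil => simp [nestedDet]
  | cons v l ih =>
    simp only [List.cons_append, nestedDet, ih, List.sum_append, List.sum_singleton, add_assoc]
    ring

theorem nestedDet_swap (P Q : List (R × R)) (a w t : R × R) :
    nestedDet (P ++ a :: w :: Q) t =
      (a.2 * w.1 - a.1 * w.2) * nestedDet (P ++ (a + w) :: Q) t +
        nestedDet (P ++ w :: a :: Q) t := by
  induction P with
  | nil =>
    simp only [List.nil_append, nestedDet, List.sum_cons, Prod.fst_add, Prod.snd_add]
    ring
  | cons v P ih =>
    have hswap : (P ++ w :: a :: Q).sum = (P ++ a :: w :: Q).sum :=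
      ((List.Perm.swap a w Q).append_left P).sum_eq
    have hmerge : (P ++ (a + w) :: Q).sum = (P ++ a :: w :: Q).sum := by simp [add_assoc]
    simp only [List.cons_append, nestedDet, ih, hswap, hmerge]
    ring

theorem nestedDet_map (f : R →+* S) (l : List (R × R)) (t : R × R) :
    nestedDet (l.map (Prod.map f f)) (Prod.map f f t) = f (nestedDet l t) := by
  induction l with
  | nil => simp [nestedDet]
  | cons v l ih =>
    have hsum : (l.map (Prod.map f f)).sum = Prod.map f f l.sum :=
      (map_list_sum (f.toAddMonoidHom.prodMap f.toAddMonoidHom) l).symm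
    simp [nestedDet, ih, hsum]

end NestedDet

/-! ### The negative multiplicity -/

/-- The down step of size `k`. -/
def downStep (k : ℕ) : Pt := (0, -(k : ℤ))

theorem downStep_injective : Function.Injective downStep := fun k l h => by
  simpa [downStep] using h

-- In `dSteps` and `hSteps` the list is coerced to a list of integers before it is mapped, so
-- these two identities do not hold definitionally.
theorem dSteps_eq_map (l : List ℕ) : dSteps l = l.map downStep := by
  simp [dSteps, downStep, ← List.map_eq_flatMap]

theorem hSteps_eq_map (l : List ℕ) : hSteps l = l.map fun k : ℕ => ((k : ℤ), 0) := by
  simp [hSteps, ← List.map_eq_flatMap]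

theorem initMinusRect_pathFrom_iff {c d : ℕ} {ν : Multiset ℕ} {L : List Pt} :
    InitMinusRect d {c} ν (pathFrom (0, d) L) ↔
      ∃ s : List ℕ, (s : Multiset ℕ) = ν ∧ L = s.map downStep ++ [((c : ℤ), 0)] := by
  simp [InitMinusRect, (pathFrom_injective _).eq_iff, dSteps_eq_map, hSteps_eq_map,
    Multiset.coe_eq_singleton]

/-- The vertical steps of a list of steps. -/
def verticals (L : List Pt) : List Pt := L.filter (·.1 = 0)

/-- The non-vertical steps of a list of steps. -/
def nonverticals (L : List Pt) : List Pt := L.filter (·.1 ≠ 0)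

theorem verticals_append (L L' : List Pt) : verticals (L ++ L') = verticals L ++ verticals L' :=
  List.filter_append ..

theorem nonverticals_append (L L' : List Pt) :
    nonverticals (L ++ L') = nonverticals L ++ nonverticals L' :=
  List.filter_append ..

theorem verticals_cons_of_eq {v : Pt} (h : v.1 = 0) (L : List Pt) :
    verticals (v :: L) = v :: verticals L := by
  simp [verticals, h]

theorem verticals_cons_of_ne {v : Pt} (h : v.1 ≠ 0) (L : List Pt) :
    verticals (v :: L) = verticals L := by
  simp [verticals, h]

theorem nonverticals_cons_of_ne {v : Pt} (h : v.1 ≠ 0) (L : List Pt) :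
    nonverticals (v :: L) = v :: nonverticals L := by
  simp [nonverticals, h]

theorem nonverticals_concat_of_ne {v : Pt} (h : v.1 ≠ 0) (L : List Pt) :
    nonverticals (L ++ [v]) = nonverticals L ++ [v] := by
  simp [nonverticals, h]

theorem mem_verticals {v : Pt} {L : List Pt} : v ∈ verticals L ↔ v ∈ L ∧ v.1 = 0 := by
  simp [verticals]

theorem sum_verticals_add_sum_nonverticals (L : List Pt) :
    (verticals L).sum + (nonverticals L).sum = L.sum := by
  simpa [verticals, nonverticals] using (List.filter_append_perm (fun v : Pt => v.1 = 0) L).sum_eq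

/-- The steps that occur in the recursion for the negative multiplicity of `γ(A,B)`, apart from
the last one: down steps, and steps to the right that do not descend. -/
def DownOrRight (v : Pt) : Prop := v.1 = 0 ∧ v.2 < 0 ∨ 0 < v.1 ∧ 0 ≤ v.2

namespace DownOrRight

theorem add_right {a w : Pt} (ha : DownOrRight a) (hw : DownOrRight w) (ha' : a.1 ≠ 0)
    (hw' : w.1 ≠ 0) : DownOrRight (a + w) := by
  simp only [DownOrRight, Prod.fst_add, Prod.snd_add] at *
  lia

theorem fst_nonneg {v : Pt} (h : DownOrRight v) : 0 ≤ v.1 := by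
  unfold DownOrRight at h
  lia

theorem add_fst_ne_zero {a w : Pt} (ha : DownOrRight a) (hw : 0 ≤ w.1) (ha' : a.1 ≠ 0) :
    (a + w).1 ≠ 0 := by
  have ha'' := ha.fst_nonneg
  rw [Prod.fst_add]
  lia

theorem snd_nonneg {v : Pt} (h : DownOrRight v) (hv : v.1 ≠ 0) : 0 ≤ v.2 := by
  unfold DownOrRight at h
  lia

theorem snd_nonpos {v : Pt} (h : DownOrRight v) (hv : v.1 = 0) : v.2 ≤ 0 := by
  unfold DownOrRight at h
  lia

theorem fst_ne_zero_of_det_neg {a w : Pt} (ha : DownOrRight a) (hw : 0 ≤ w.1)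
    (h : det a w < 0) : a.1 ≠ 0 := by
  intro ha'
  simp only [det, ha', zero_mul, zero_sub, neg_neg_iff_pos] at h
  exact h.not_ge (mul_nonpos_of_nonpos_of_nonneg (ha.snd_nonpos ha') hw)

theorem lamLT_zero {v : Pt} (h : DownOrRight v) : lamLT 0 v := by
  simp only [DownOrRight, lamLT, Prod.fst_zero, Prod.snd_zero] at *
  lia

theorem det_nonneg_trans {u v w : Pt} (hu : DownOrRight u) (hv : DownOrRight v)
    (hw : DownOrRight w) (huv : 0 ≤ det u v) (hvw : 0 ≤ det v w) : 0 ≤ det u w := by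
  by_cases hv₁ : v.1 = 0
  · have hv₂ : v.2 < 0 := by
      unfold DownOrRight at hv
      lia
    have hu₁ : u.1 = 0 := by
      rw [det, hv₁, mul_zero, sub_zero] at huv
      exact (nonpos_of_mul_nonneg_left huv hv₂).antisymm hu.fst_nonneg
    rw [det, hu₁, zero_mul, zero_sub, neg_nonneg]
    exact mul_nonpos_of_nonpos_of_nonneg (hu.snd_nonpos hu₁) hw.fst_nonneg
  · have hplucker : v.1 * det u w = u.1 * det v w + w.1 * det u v := by
      unfold det
      ring
    have hv₁' : 0 < v.1 := hv.fst_nonneg.lt_of_ne' hv₁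
    refine nonneg_of_mul_nonneg_right (a := v.1) ?_ hv₁'
    rw [hplucker]
    exact add_nonneg (mul_nonneg hu.fst_nonneg hvw) (mul_nonneg hw.fst_nonneg huv)

end DownOrRight

theorem NoTurn.pairwise_det_nonneg {L : List Pt} (h : NoTurn (· < 0) L)
    (hL : ∀ v ∈ L, DownOrRight v) : L.Pairwise fun u v => 0 ≤ det u v := by
  induction L with
  | nil => exact .nil
  | cons u L ih =>
    have hL' := ih h.tail fun v hv => hL v (by simp [hv])
    refine .cons (fun w hw => ?_) hL'
    obtain _ | ⟨v, L⟩ := L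
    · simp at hw
    have huv : 0 ≤ det u v := not_lt.mp (List.isChain_cons_cons.mp h).1
    obtain rfl | hw := List.mem_cons.mp hw
    · exact huv
    · exact (hL u (by simp)).det_nonneg_trans (hL v (by simp)) (hL w (by simp [hw])) huv
        (List.rel_of_pairwise_cons hL' hw)

theorem snd_sum_verticals_nonpos {L : List Pt} (hL : ∀ v ∈ L, DownOrRight v) :
    (verticals L).sum.2 ≤ 0 :=
  List.sum_induction (fun v : Pt => v.2 ≤ 0) (fun _ _ => add_nonpos) le_rfl fun v hv => by
    obtain ⟨hvL, hv⟩ := List.mem_filter.mp hv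
    exact (hL v hvL).snd_nonpos (by simpa using hv)

theorem snd_sum_nonverticals_nonneg {L : List Pt} (hL : ∀ v ∈ L, DownOrRight v) :
    0 ≤ (nonverticals L).sum.2 :=
  List.sum_induction (fun v : Pt => 0 ≤ v.2) (fun _ _ => add_nonneg) le_rfl fun v hv => by
    obtain ⟨hvL, hv⟩ := List.mem_filter.mp hv
    exact (hL v hvL).snd_nonneg (by simpa using hv)

/-- The invariant of the recursion for the negative multiplicity: the path has steps `M` followed
by the step `t`, and its vertical steps in `M` are the down steps of the sizes in `ν`, so that the
path ends at `(c, 0)`. The condition on the tail of `M` ensures that the sizes of the down steps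
stay distinct when `t` itself is vertical. -/
structure MinusState (c d : ℕ) (ν : Multiset ℕ) (M : List Pt) (t : Pt) : Prop where
  downOrRight : ∀ v ∈ M, DownOrRight v
  verticals_eq : (verticals M : Multiset Pt) = ν.map downStep
  sum_eq : (nonverticals M).sum + t = ((c : ℤ), 0)
  nonneg : 0 ≤ t.1
  notMem_tail : t ∉ verticals M.tail
  inside : Inside (rect c d) (pathFrom (0, (d : ℤ)) (M ++ [t]))

theorem sum_map_downStep (ν : Multiset ℕ) : (ν.map downStep).sum = downStep ν.sum := by
  induction ν using Multiset.induction_on with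
  | empty => rfl
  | cons k ν ih => simp [ih, downStep, add_comm]

namespace MinusState

variable {c d : ℕ} {ν : Multiset ℕ} {M P Q : List Pt} {a u w t : Pt}

theorem sum_verticals (h : MinusState c d ν M t) : (verticals M).sum = downStep ν.sum := by
  rw [← sum_map_downStep, ← h.verticals_eq, Multiset.sum_coe]

theorem sum_add (hν : ν.sum = d) (h : MinusState c d ν M t) :
    (0, (d : ℤ)) + M.sum + t = ((c : ℤ), 0) := by
  rw [← sum_verticals_add_sum_nonverticals M, h.sum_verticals, hν, ← h.sum_eq, downStep]
  ext <;> simp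

theorem not_init (h : MinusState c d ν M t) (hM : nonverticals M ≠ []) :
    ¬ InitMinusRect d {c} ν (pathFrom (0, d) (M ++ [t])) := by
  rw [initMinusRect_pathFrom_iff]
  rintro ⟨s, -, hs⟩
  obtain ⟨rfl, -⟩ := List.append_inj' hs rfl
  exact hM (by simp [nonverticals, downStep])

theorem fst_ne_zero (h : MinusState c d ν (P ++ a :: w :: Q) t) (hdet : det a w < 0) :
    a.1 ≠ 0 :=
  (h.downOrRight a (by simp)).fst_ne_zero_of_det_neg (h.downOrRight w (by simp)).fst_nonneg hdet

theorem add_mem_rect (hν : ν.sum = d) (h : MinusState c d ν (P ++ a :: w :: Q) t)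
    (ha : a.1 ≠ 0) : (0, (d : ℤ)) + P.sum + w ∈ rect c d := by
  have ha' := h.downOrRight a (by simp)
  have hw' := h.downOrRight w (by simp)
  have hin := h.inside
  simp only [List.append_assoc, List.cons_append, inside_pathFrom_append,
    inside_pathFrom_cons] at hin
  obtain ⟨-, hp, -, hpaw⟩ := hin
  have hlow : w.1 = 0 → 0 ≤ d + P.sum.2 + w.2 := fun hw => by
    have hsum := congrArg Prod.snd h.sum_verticals
    simp only [verticals_append, verticals_cons_of_ne ha, verticals_cons_of_eq hw,
      List.sum_append, List.sum_cons, Prod.snd_add, downStep, hν] at hsum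
    have hP := congrArg Prod.snd (sum_verticals_add_sum_nonverticals P)
    have hP' := snd_sum_nonverticals_nonneg (L := P) fun v hv => h.downOrRight v (by simp [hv])
    have hQ := snd_sum_verticals_nonpos (L := Q) fun v hv => h.downOrRight v (by simp [hv])
    rw [Prod.snd_add] at hP
    lia
  have hpaw := hpaw.1.start_mem
  simp only [DownOrRight, rect, Set.mem_ofPred_eq, Prod.fst_add, Prod.snd_add] at *
  lia

theorem push (hν : ν.sum = d) (h : MinusState c d ν (P ++ a :: w :: Q) t) (ha : a.1 ≠ 0) :
    MinusState c d ν (P ++ w :: a :: Q) t where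
  downOrRight v hv := h.downOrRight v (by grind)
  verticals_eq := by
    rw [← h.verticals_eq]
    by_cases hw : w.1 = 0 <;> simp [verticals, ha, hw]
  sum_eq := by
    rw [← h.sum_eq]
    by_cases hw : w.1 = 0 <;> simp [nonverticals, ha, hw, add_left_comm]
  nonneg := h.nonneg
  notMem_tail := by
    have ht := h.notMem_tail
    cases P <;> by_cases hw : w.1 = 0 <;> simp_all [verticals]
  inside := by
    have hin := h.inside
    simp only [List.append_assoc, List.cons_append] at hin ⊢
    exact hin.swap_iff.mpr (h.add_mem_rect hν ha)

theorem merge (h : MinusState c d ν (P ++ a :: w :: Q) t) (ha : a.1 ≠ 0) (hw : w.1 ≠ 0) :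
    MinusState c d ν (P ++ (a + w) :: Q) t := by
  have haw := (h.downOrRight a (by simp)).add_right (h.downOrRight w (by simp)) ha hw
  have haw' := (h.downOrRight a (by simp)).add_fst_ne_zero
    (h.downOrRight w (by simp)).fst_nonneg ha
  have hverticals (P : List Pt) : verticals (P ++ (a + w) :: Q) = verticals (P ++ a :: w :: Q) := by
    simp only [verticals_append, verticals_cons_of_ne, ha, hw, haw', ne_eq, not_false_iff]
  exact {
    downOrRight := fun v hv => by
      simp only [List.mem_append, List.mem_cons] at hv
      obtain hv | rfl | hv := hv
      · exact h.downOrRight v (by simp [hv])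
      · exact haw
      · exact h.downOrRight v (by simp [hv])
    verticals_eq := by rw [hverticals, h.verticals_eq]
    sum_eq := by
      rw [← h.sum_eq]
      simp only [nonverticals_append, nonverticals_cons_of_ne, ha, hw, haw', ne_eq, not_false_iff,
        List.sum_append, List.sum_cons, add_assoc]
    nonneg := h.nonneg
    notMem_tail := by
      obtain _ | ⟨v, P⟩ := P
      · simpa [verticals_cons_of_ne hw] using h.notMem_tail
      · simpa [hverticals] using h.notMem_tail
    inside := by
      have hin := h.inside
      simp only [List.append_assoc, List.cons_append] at hin ⊢
      exact hin.merge }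

theorem absorb (h : MinusState c d ν (M ++ [u]) t) (hu : u.1 ≠ 0) :
    MinusState c d ν M (u + t) where
  downOrRight v hv := h.downOrRight v (by simp [hv])
  verticals_eq := by
    rw [← h.verticals_eq]
    simp [verticals, hu]
  sum_eq := by
    rw [← h.sum_eq]
    simp [nonverticals, hu, add_assoc]
  nonneg := add_nonneg (h.downOrRight u (by simp)).fst_nonneg h.nonneg
  notMem_tail := by
    simpa [verticals] using fun _ => (h.downOrRight u (by simp)).add_fst_ne_zero h.nonneg hu
  inside := by
    have hin := h.inside
    rw [List.append_assoc] at hin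
    exact hin.merge

end MinusState

theorem multMinusRect_eq_zero_of_notMem {c d k : ℕ} {ν : Multiset ℕ} {L : List Pt} (hk : k ∈ ν)
    (hL : ∀ v ∈ L, 0 ≤ v.1) (hkL : downStep k ∉ L) :
    multMinusRect c d {c} ν (pathFrom (0, (d : ℤ)) L) = 0 := by
  refine multOf_eq_zero_of_invariant (C := fun L => (∀ v ∈ L, 0 ≤ v.1) ∧ downStep k ∉ L)
    (fun z hz => by lia) _ ?_ ?_ ⟨hL, hkL⟩
  · rintro L ⟨-, hkL⟩ hinit
    obtain ⟨s, rfl, rfl⟩ := initMinusRect_pathFrom_iff.mp hinit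
    exact hkL (List.mem_append_left _ (List.mem_map_of_mem hk))
  · rintro P a w Q hdet ⟨hL, hkL⟩
    have ha := hL a (by simp)
    have hw := hL w (by simp)
    have haw : downStep k ≠ a + w := fun haw => by
      have haw := congrArg Prod.fst haw
      simp only [downStep, Prod.fst_add] at haw
      simp [det, show a.1 = 0 by lia, show w.1 = 0 by lia] at hdet
    refine ⟨⟨fun v hv => ?_, by grind⟩, fun v hv => hL v (by grind), by grind⟩
    simp only [List.mem_append, List.mem_cons] at hv
    obtain hv | rfl | hv := hv
    · exact hL v (by simp [hv])
    · exact add_nonneg ha hw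
    · exact hL v (by simp [hv])

namespace MinusState

variable {c d : ℕ} {ν : Multiset ℕ} {M P Q : List Pt} {a u w t : Pt}

theorem multMinusRect_cut_eq_zero (hν : ν.Nodup) (h : MinusState c d ν (P ++ a :: w :: Q) t)
    (ha : a.1 ≠ 0) (hw : w.1 = 0) :
    multMinusRect c d {c} ν (pathFrom (0, (d : ℤ)) (P ++ (a + w) :: Q ++ [t])) = 0 := by
  have hverticals : verticals (P ++ a :: w :: Q) = verticals P ++ w :: verticals Q := by
    rw [verticals_append, verticals_cons_of_ne ha, verticals_cons_of_eq hw]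
  have hnodup : (verticals (P ++ a :: w :: Q)).Nodup := by
    rw [← Multiset.coe_nodup, h.verticals_eq]
    exact hν.map downStep_injective
  obtain ⟨k, hk, rfl⟩ : ∃ k ∈ ν, downStep k = w := by
    rw [← Multiset.mem_map, ← h.verticals_eq, hverticals]
    simp
  have ht := h.notMem_tail
  refine multMinusRect_eq_zero_of_notMem hk (fun v hv => ?_) fun hmem => ?_
  · simp only [List.mem_append, List.mem_cons, List.not_mem_nil, or_false] at hv
    obtain (hv | rfl | hv) | rfl := hv
    · exact (h.downOrRight v (by simp [hv])).fst_nonneg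
    · exact add_nonneg (h.downOrRight a (by simp)).fst_nonneg hw.ge
    · exact (h.downOrRight v (by simp [hv])).fst_nonneg
    · exact h.nonneg
  · rw [hverticals, List.nodup_middle, List.nodup_cons, ← verticals_append, mem_verticals] at hnodup
    have hne : downStep k ≠ a + downStep k := fun h' => ha (by simp [right_eq_add.mp h'])
    have htail : downStep k ∈ verticals (P ++ a :: downStep k :: Q).tail := by
      cases P <;> simp [mem_verticals, hw]
    have hkt : downStep k ≠ t := fun h' => ht (h' ▸ htail)
    simp_all

theorem snd_add_snd (h : MinusState c d ν (M ++ [u]) t) (hu : u.1 ≠ 0) :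
    (nonverticals M).sum.2 + u.2 + t.2 = 0 := by
  simpa [nonverticals_concat_of_ne hu] using congrArg Prod.snd h.sum_eq

theorem snd_eq_zero (h : MinusState c d ν (M ++ [u]) t) (hno : NoTurn (· < 0) (M ++ [u]))
    (hu₁ : u.1 ≠ 0) (hu₂ : u.2 = 0) : t.2 = 0 := by
  have hu₁' : 0 < u.1 := (h.downOrRight u (by simp)).fst_nonneg.lt_of_ne' hu₁
  have hpair := (List.pairwise_append.mp (hno.pairwise_det_nonneg h.downOrRight)).2.2
  have hM : (nonverticals M).sum.2 ≤ 0 :=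
    List.sum_induction (fun v : Pt => v.2 ≤ 0) (fun _ _ => add_nonpos) le_rfl fun v hv => by
      have hvu := hpair v (List.mem_of_mem_filter hv) u (by simp)
      rw [det, hu₂, mul_zero, zero_sub, neg_nonneg] at hvu
      exact nonpos_of_mul_nonpos_left hvu hu₁'
  have hM' := snd_sum_nonverticals_nonneg (L := M) fun v hv => h.downOrRight v (by simp [hv])
  have hsum := h.snd_add_snd hu₁
  lia

theorem nonverticals_eq_nil (h : MinusState c d ν (M ++ [u]) t)
    (hno : NoTurn (· < 0) (M ++ [u])) (hu : u.1 = 0) : nonverticals (M ++ [u]) = [] := by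
  have hpair := (List.pairwise_append.mp (hno.pairwise_det_nonneg h.downOrRight)).2.2
  have hu₂ : u.2 < 0 := by
    have hu' := h.downOrRight u (by simp)
    unfold DownOrRight at hu'
    lia
  refine List.filter_eq_nil_iff.mpr fun v hv => ?_
  obtain hv | rfl : v ∈ M ∨ v = u := by simpa using hv
  · have hvu := hpair v hv u (by simp)
    rw [det, hu, mul_zero, sub_zero] at hvu
    simpa using (nonpos_of_mul_nonneg_left hvu hu₂).antisymm
      (h.downOrRight v (by simp [hv])).fst_nonneg
  · simpa using hu

theorem init (h : MinusState c d ν M t) (hM : nonverticals M = []) :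
    InitMinusRect d {c} ν (pathFrom (0, (d : ℤ)) (M ++ [t])) := by
  have hvertical : verticals M = M := by
    simpa [verticals, nonverticals, List.filter_eq_nil_iff] using hM
  have hrange : ∀ v ∈ M, v ∈ Set.range downStep := fun v hv => by
    have hv' : v ∈ ν.map downStep := by
      rwa [← h.verticals_eq, hvertical, Multiset.mem_coe]
    obtain ⟨k, -, hk⟩ := Multiset.mem_map.mp hv'
    exact ⟨k, hk⟩
  obtain ⟨s, rfl⟩ : M ∈ Set.range (List.map downStep) := by rwa [Set.range_list_map]
  have hs := h.verticals_eq
  have ht := h.sum_eq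
  rw [hvertical, ← Multiset.map_coe] at hs
  rw [hM, List.sum_nil, zero_add] at ht
  exact initMinusRect_pathFrom_iff.mpr ⟨s, Multiset.map_injective downStep_injective hs, by rw [ht]⟩

theorem multMinusRect_eq_of_noTurn (h : MinusState c d ν M t)
    (hno : NoTurn (· < 0) (M ++ [t])) :
    (multMinusRect c d {c} ν (pathFrom (0, (d : ℤ)) (M ++ [t])) : ℤ) =
      nestedDet (nonverticals M) t := by
  by_cases hM : nonverticals M = []
  · rw [hM, nestedDet, multMinusRect, multOf_eq_one (h.init hM), Nat.cast_one]
  rw [multMinusRect, hno.multOf_eq_zero (h.not_init hM), Nat.cast_zero]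
  obtain rfl | ⟨M, u, rfl⟩ := M.eq_nil_or_concat'
  · simp [nonverticals] at hM
  have hu₁ : u.1 ≠ 0 := fun hu => hM (h.nonverticals_eq_nil hno.left_of_append hu)
  have hu := h.downOrRight u (by simp)
  have hdet : 0 ≤ u.1 * t.2 - u.2 * t.1 := by
    have hno' := (List.isChain_append_cons_cons.mp (List.append_assoc M [u] [t] ▸ hno)).2.1
    exact not_lt.mp hno'
  have ht₂ : 0 ≤ t.2 :=
    nonneg_of_mul_nonneg_right (by linarith [mul_nonneg (hu.snd_nonneg hu₁) h.nonneg])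
      (hu.fst_nonneg.lt_of_ne' hu₁)
  have hM' := snd_sum_nonverticals_nonneg (L := M) fun v hv => h.downOrRight v (by simp [hv])
  have hsum := h.snd_add_snd hu₁
  have hu₂ := hu.snd_nonneg hu₁
  rw [nonverticals_concat_of_ne hu₁, nestedDet_concat, show u.2 = 0 by lia, show t.2 = 0 by lia]
  ring

theorem multMinusRect_eq_of_absorb (hνd : ν.sum = d) (h : MinusState c d ν (M ++ [u]) t)
    (hno : NoTurn (· < 0) (M ++ [u])) (hdet : det u t < 0)
    (ih : (multMinusRect c d {c} ν (pathFrom (0, (d : ℤ)) (M ++ [u + t])) : ℤ) =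
      nestedDet (nonverticals M) (u + t)) :
    (multMinusRect c d {c} ν (pathFrom (0, (d : ℤ)) (M ++ [u] ++ [t])) : ℤ) =
      nestedDet (nonverticals (M ++ [u])) t := by
  have hu := h.downOrRight u (by simp)
  have hu₁ := hu.fst_ne_zero_of_det_neg h.nonneg hdet
  have hu₂ : 0 < u.2 := (hu.snd_nonneg hu₁).lt_of_ne' fun hu₂ => by
    rw [det, hu₂, h.snd_eq_zero hno hu₁ hu₂, mul_zero, zero_mul, sub_zero] at hdet
    exact hdet.false
  have hout : ¬ Inside (rect c d) (pathFrom (0, (d : ℤ)) (M ++ [t, u])) := fun hin => by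
    have hend := congrArg Prod.snd (h.sum_add hνd)
    rw [inside_pathFrom_append, inside_pathFrom_cons] at hin
    have hmem := hin.2.2.start_mem
    simp only [rect, Set.mem_ofPred_eq, List.sum_append, List.sum_singleton, Prod.snd_add]
      at hend hmem
    lia
  have hcorner := multOf_corner (Δ := rect c d) (fun z hz => by lia)
    (List.append_assoc M [u] [t] ▸ h.not_init (by simp [nonverticals, hu₁])) hno hdet
  rw [if_neg hout, add_zero] at hcorner
  rw [List.append_assoc, multMinusRect, List.singleton_append, hcorner]
  push_cast
  rw [← multMinusRect, ih, nonverticals_concat_of_ne hu₁, nestedDet_concat, abs_of_neg hdet, det]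
  ring

theorem multMinusRect_eq_of_corner (hν : ν.Nodup) (hνd : ν.sum = d)
    (h : MinusState c d ν (P ++ a :: w :: Q) t) (hno : NoTurn (· < 0) (P ++ [a]))
    (hdet : det a w < 0)
    (ih_cut : w.1 ≠ 0 →
      (multMinusRect c d {c} ν (pathFrom (0, (d : ℤ)) (P ++ (a + w) :: Q ++ [t])) : ℤ) =
        nestedDet (nonverticals (P ++ (a + w) :: Q)) t)
    (ih_push : (multMinusRect c d {c} ν (pathFrom (0, (d : ℤ)) (P ++ w :: a :: Q ++ [t])) : ℤ) =
      nestedDet (nonverticals (P ++ w :: a :: Q)) t) :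
    (multMinusRect c d {c} ν (pathFrom (0, (d : ℤ)) (P ++ a :: w :: Q ++ [t])) : ℤ) =
      nestedDet (nonverticals (P ++ a :: w :: Q)) t := by
  have ha := h.fst_ne_zero hdet
  have hcorner := multOf_corner (Δ := rect c d) (Q := Q ++ [t]) (fun z hz => by lia)
    (by simpa using h.not_init (by simp [nonverticals, ha])) hno hdet
  rw [if_pos (by simpa using (h.push hνd ha).inside)] at hcorner
  simp only [← List.cons_append, ← List.append_assoc] at hcorner
  rw [multMinusRect, hcorner, Nat.cast_add, Nat.cast_mul, Int.natCast_natAbs, abs_of_neg hdet]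
  rw [← multMinusRect, ih_push]
  by_cases hw : w.1 = 0
  · rw [h.multMinusRect_cut_eq_zero hν ha hw]
    simp [nonverticals, ha, hw]
  · have haw := (h.downOrRight a (by simp)).add_fst_ne_zero
      (h.downOrRight w (by simp)).fst_nonneg ha
    rw [ih_cut hw]
    simp only [nonverticals_append, nonverticals_cons_of_ne, ha, hw, haw, ne_eq, not_false_iff]
    rw [nestedDet_swap _ _ a w, det, neg_sub]

theorem multMinusRect_eq (hν : ν.Nodup) (hνd : ν.sum = d) (h : MinusState c d ν M t) :
    (multMinusRect c d {c} ν (pathFrom (0, (d : ℤ)) (M ++ [t])) : ℤ) =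
      nestedDet (nonverticals M) t := by
  generalize hL : M ++ [t] = L
  induction L using corner_induction (s := (· < 0)) (fun z hz => by lia) generalizing M t with
  | ih L ih
  subst hL
  obtain hno | ⟨P, a, w, Q, hL, hno, hdet⟩ := noTurn_or_exists_corner (· < 0) (M ++ [t])
  · exact h.multMinusRect_eq_of_noTurn hno
  obtain ⟨ih_cut, ih_push⟩ := ih P a w Q hL hdet
  obtain rfl | ⟨Q, t', rfl⟩ := Q.eq_nil_or_concat'
  · obtain ⟨rfl, rfl⟩ : M = P ++ [a] ∧ t = w := by
      simpa using List.append_inj' (hL.trans (List.append_cons P a [w])) rfl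
    have ha := (h.downOrRight a (by simp)).fst_ne_zero_of_det_neg h.nonneg hdet
    exact h.multMinusRect_eq_of_absorb hνd hno hdet (ih_cut (h.absorb ha) rfl)
  · obtain ⟨rfl, rfl⟩ : M = P ++ a :: w :: Q ∧ t = t' := by
      simpa using List.append_inj' (hL.trans (List.append_assoc P (a :: w :: Q) [t']).symm) rfl
    have ha := h.fst_ne_zero hdet
    simp only [← List.cons_append, ← List.append_assoc] at ih_cut ih_push
    exact h.multMinusRect_eq_of_corner hν hνd hno hdet (fun hw => ih_cut (h.merge ha hw) rfl)
      (ih_push (h.push hνd ha) rfl)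

end MinusState

/-! ### The positive multiplicity -/

/-- The positive multiplicity of the path with steps `L` starting at `(0, d)`, for unit steps on the
top edge of the rectangle and a single step on its right edge. -/
def plusMult (c d : ℕ) (L : List Pt) : ℕ :=
  multPlusRect c d (Multiset.replicate c 1) {d} (pathFrom (0, (d : ℤ)) L)

theorem initPlusRect_pathFrom_iff {c d : ℕ} {L : List Pt} :
    InitPlusRect d (Multiset.replicate c 1) {d} (pathFrom (0, d) L) ↔
      L = List.replicate c (1, 0) ++ [downStep d] := by
  simp [InitPlusRect, (pathFrom_injective _).eq_iff, dSteps_eq_map, hSteps_eq_map,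
    Multiset.coe_eq_singleton, ← Multiset.coe_replicate, List.perm_replicate]

theorem plusMult_init (c d : ℕ) : plusMult c d (List.replicate c (1, 0) ++ [downStep d]) = 1 :=
  multOf_eq_one (initPlusRect_pathFrom_iff.mpr rfl)

theorem noTurn_replicate_append_map_downStep (k : ℕ) (s : List ℕ) :
    NoTurn (0 < ·) (List.replicate k (1, 0) ++ s.map downStep) := by
  refine List.Pairwise.isChain (List.pairwise_append.mpr ⟨?_, ?_, ?_⟩)
  · simp [List.pairwise_replicate, det]
  · simp [List.pairwise_map, det, downStep, List.pairwise_of_forall]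
  · simp [det, downStep]

theorem plusMult_eq_zero_of_mem {c d : ℕ} {L : List Pt} {v : Pt} (hL : ∀ v ∈ L, lamLT 0 v)
    (hvL : v ∈ L) (hv : 2 ≤ v.1 ∨ 0 < v.1 ∧ v.2 < 0) : plusMult c d L = 0 := by
  refine multOf_eq_zero_of_invariant
    (C := fun L => (∀ v ∈ L, lamLT 0 v) ∧ ∃ v ∈ L, 2 ≤ v.1 ∨ 0 < v.1 ∧ v.2 < 0)
    (fun z hz => by lia) _ ?_ ?_ ⟨hL, v, hvL, hv⟩
  · rintro L ⟨-, v, hvL, hv⟩ hinit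
    rw [initPlusRect_pathFrom_iff.mp hinit] at hvL
    simp only [List.mem_append, List.mem_replicate, List.mem_singleton] at hvL
    obtain ⟨-, rfl⟩ | rfl := hvL <;> simp [downStep] at hv
  · rintro P a w Q - ⟨hL, v, hvL, hv⟩
    have ha := hL a (by simp)
    have hw := hL w (by simp)
    simp only [lamLT, Prod.fst_zero, Prod.snd_zero] at ha hw
    refine ⟨⟨fun u hu => ?_, ?_⟩, fun u hu => hL u (by grind), v, by grind, hv⟩
    · simp only [List.mem_append, List.mem_cons] at hu
      obtain hu | rfl | hu := hu
      · exact hL u (by simp [hu])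
      · simp only [lamLT, Prod.fst_zero, Prod.snd_zero, Prod.fst_add, Prod.snd_add]
        lia
      · exact hL u (by simp [hu])
    · by_cases hv' : v = a ∨ v = w
      · refine ⟨a + w, by simp, ?_⟩
        simp only [Prod.fst_add, Prod.snd_add]
        obtain rfl | rfl := hv' <;> lia
      · exact ⟨v, by grind, hv⟩

section Sweep

variable {ι : Type*} {x : ι → ℕ} {c d k : ℕ} {R : List ι} {a : ι} {b : ℤ} {W : List Pt}

/-- The down steps of the sizes `x i` for `i` in `R`, in order. -/
def descent (x : ι → ℕ) (R : List ι) : List Pt := (R.map x).map downStep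

theorem sum_descent (x : ι → ℕ) (R : List ι) : (descent x R).sum = downStep (R.map x).sum := by
  simpa [descent] using sum_map_downStep ((R.map x : List ℕ) : Multiset ℕ)

/-- The path whose part in the columns before `x = k` has been swept onto the top edge: `k` unit
steps to the right, the descent `R` in the column `x = k`, and the remaining steps `W`. -/
def swept (x : ι → ℕ) (k : ℕ) (R : List ι) (W : List Pt) : List Pt :=
  List.replicate k (1, 0) ++ descent x R ++ W

theorem swept_append (R R' : List ι) (W : List Pt) :
    swept x k (R ++ R') W = swept x k R (descent x R' ++ W) := by
  simp [swept, descent]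

theorem sum_prefix_swept (x : ι → ℕ) (k : ℕ) (R : List ι) :
    (List.replicate k ((1, 0) : Pt) ++ descent x R).sum = ((k : ℤ), -((R.map x).sum : ℤ)) := by
  rw [List.sum_append, sum_descent]
  simp [downStep]

theorem Inside.swept_add_step_mem
    (h : Inside (rect c d) (pathFrom (0, (d : ℤ)) (swept x k R ((1, b) :: W)))) :
    ((k : ℤ) + 1, d - (R.map x).sum + b) ∈ rect c d := by
  rw [swept, inside_pathFrom_append, inside_pathFrom_cons, sum_prefix_swept] at h
  simpa [← sub_eq_add_neg] using h.2.2.start_mem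

theorem Inside.swept_cut
    (h : Inside (rect c d) (pathFrom (0, (d : ℤ)) (swept x k (R ++ [a]) ((1, b) :: W)))) :
    Inside (rect c d) (pathFrom (0, (d : ℤ)) (swept x k R ((1, b - x a) :: W))) := by
  rw [swept_append] at h
  simpa [swept, descent, downStep, sub_eq_neg_add] using Inside.merge h

theorem Inside.swept_push (hb : b ≤ (R.map x).sum)
    (h : Inside (rect c d) (pathFrom (0, (d : ℤ)) (swept x k (R ++ [a]) ((1, b) :: W)))) :
    Inside (rect c d) (pathFrom (0, (d : ℤ)) (swept x k R ((1, b) :: downStep (x a) :: W))) := by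
  have hmem := h.swept_add_step_mem
  rw [swept_append] at h
  refine (Inside.swap_iff h).mpr ?_
  rw [sum_prefix_swept]
  simp only [rect, Set.mem_ofPred_eq, Prod.mk_add_mk, List.map_append, List.sum_append] at hmem ⊢
  lia

theorem plusMult_corner (ha : 0 < x a) :
    plusMult c d (swept x k (R ++ [a]) ((1, b) :: W)) =
      x a * plusMult c d (swept x k R ((1, b - x a) :: W)) +
        if Inside (rect c d) (pathFrom (0, (d : ℤ)) (swept x k R ((1, b) :: downStep (x a) :: W)))
        then plusMult c d (swept x k R ((1, b) :: downStep (x a) :: W)) else 0 := by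
  have hdet : det (downStep (x a)) (1, b) = x a := by simp [det, downStep]
  have hcut : downStep (x a) + (1, b) = (1, b - x a) := by
    ext <;> simp [downStep, sub_eq_neg_add]
  have hno : NoTurn (0 < ·) (List.replicate k (1, 0) ++ descent x R ++ [downStep (x a)]) := by
    simpa [descent] using noTurn_replicate_append_map_downStep k ((R ++ [a]).map x)
  rw [swept_append]
  have hinit : ¬ InitPlusRect d (Multiset.replicate c 1) {d} (pathFrom (0, (d : ℤ))
      (swept x k R (downStep (x a) :: (1, b) :: W))) := fun h => by
    have hinit := noTurn_replicate_append_map_downStep c [d]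
    rw [List.map_singleton, ← initPlusRect_pathFrom_iff.mp h] at hinit
    exact (List.isChain_append_cons_cons.mp hinit).2.1 (by simpa [hdet] using ha)
  have hcorner := multOf_corner (Δ := rect c d) (fun z hz => by lia) hinit hno
    (by simpa [hdet] using ha)
  rwa [hdet, hcut, Int.natAbs_natCast] at hcorner

theorem plusMult_sweep_nil (hW : ∀ v ∈ W, lamLT 0 v)
    (hin : Inside (rect c d) (pathFrom (0, (d : ℤ)) (swept x k [] ((1, b) :: W)))) :
    plusMult c d (swept x k [] ((1, b) :: W)) =
      if 0 = b then plusMult c d (swept x (k + 1) [] W) else 0 := by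
  split_ifs with hb
  · simp [swept, descent, ← hb, List.replicate_succ']
  have hb' : b < 0 := by
    have hmem := hin.swept_add_step_mem
    simp only [rect, Set.mem_ofPred_eq, List.map_nil, List.sum_nil] at hmem
    lia
  refine plusMult_eq_zero_of_mem (v := (1, b)) (fun v hv => ?_) (by simp [swept])
    (.inr ⟨one_pos, hb'⟩)
  simp only [swept, descent, List.map_nil, List.append_nil, List.mem_append, List.mem_replicate,
    List.mem_cons] at hv
  obtain ⟨-, rfl⟩ | rfl | hv := hv
  · exact .inl one_pos
  · exact .inl one_pos
  · exact hW v hv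

/-- The subset `J` of a summand records the corners that were cut; for the others the parallelogram
was completed, which moves the down step into the next column. -/
theorem plusMult_sweep (hx : ∀ i, 0 < x i) (hR : R.Nodup) (hW : ∀ v ∈ W, lamLT 0 v)
    (hin : Inside (rect c d) (pathFrom (0, (d : ℤ)) (swept x k R ((1, b) :: W)))) :
    plusMult c d (swept x k R ((1, b) :: W)) =
      ∑ J ∈ R.toFinset.powerset, if ∑ i ∈ J, (x i : ℤ) = b then
        (∏ i ∈ J, x i) * plusMult c d (swept x (k + 1) (R.filter (· ∉ J)) W) else 0 := by
  induction R using List.reverseRecOn generalizing b W with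
  | nil => simpa using plusMult_sweep_nil hW hin
  | append_singleton R a ih =>
    have ha : a ∉ R := by simpa using (List.nodup_append'.mp hR).2.2
    have hR' := hR.of_append_left
    have hW' : ∀ v ∈ downStep (x a) :: W, lamLT 0 v :=
      List.forall_mem_cons.mpr ⟨.inr ⟨rfl, by simpa [downStep] using hx a⟩, hW⟩
    have hRa : (R ++ [a]).toFinset = insert a R.toFinset := by ext; simp
    rw [plusMult_corner (hx a), ih hR' hW hin.swept_cut, hRa,
      Finset.sum_powerset_insert (by simpa using ha), add_comm, Finset.mul_sum]
    congr 1
    · split_ifs with hpush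
      · rw [ih hR' hW' hpush]
        refine Finset.sum_congr rfl fun J hJ => ?_
        have haJ : a ∉ J := fun h => ha (by simpa using Finset.mem_powerset.mp hJ h)
        simp [List.filter_append, haJ, swept_append, descent]
      · refine (Finset.sum_eq_zero fun J hJ => if_neg fun hJb => hpush (hin.swept_push ?_)).symm
        rw [← hJb, ← Nat.cast_sum, Nat.cast_le, ← List.sum_toFinset x hR']
        exact Finset.sum_le_sum_of_subset (Finset.mem_powerset.mp hJ)
    · refine Finset.sum_congr rfl fun J hJ => ?_
      have haJ : a ∉ J := fun h => ha (by simpa using Finset.mem_powerset.mp hJ h)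
      have hfilter : (R ++ [a]).filter (· ∉ insert a J) = R.filter (· ∉ J) := by
        rw [List.filter_append, List.filter_singleton]
        simpa using List.filter_congr fun i hi => by simp [ne_of_mem_of_not_mem hi ha]
      rw [hfilter, Finset.sum_insert haJ, Finset.prod_insert haJ, mul_ite, mul_zero, mul_assoc]
      simp only [eq_sub_iff_add_eq']

theorem pos_of_injective_sum (hinj : Function.Injective fun J : Finset ι => ∑ i ∈ J, x i) (i : ι) :
    0 < x i :=
  Nat.pos_of_ne_zero fun hi => Finset.singleton_ne_empty i (hinj (by simpa using hi))

theorem plusMult_sweep_of_injective (hinj : Function.Injective fun J : Finset ι => ∑ i ∈ J, x i)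
    (hR : R.Nodup) (hW : ∀ v ∈ W, lamLT 0 v) {I : Finset ι} (hI : I ⊆ R.toFinset)
    (hin : Inside (rect c d)
      (pathFrom (0, (d : ℤ)) (swept x k R ((1, ∑ i ∈ I, (x i : ℤ)) :: W)))) :
    plusMult c d (swept x k R ((1, ∑ i ∈ I, (x i : ℤ)) :: W)) =
      (∏ i ∈ I, x i) * plusMult c d (swept x (k + 1) (R.filter (· ∉ I)) W) := by
  rw [plusMult_sweep (pos_of_injective_sum hinj) hR hW hin,
    Finset.sum_eq_single_of_mem I (Finset.mem_powerset.mpr hI), if_pos rfl]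
  exact fun J _ hJ => if_neg fun h => hJ (hinj (by exact_mod_cast h))

/-- The steps of a path passing through one column after another: a pair `(A, B)` stands for the
descent `A` followed by the step `(1, ∑ i ∈ B, x i)` to the next column. -/
def columnSteps (x : ι → ℕ) (cols : List (List ι × Finset ι)) : List Pt :=
  cols.flatMap fun p => descent x p.1 ++ [(1, ∑ i ∈ p.2, (x i : ℤ))]

theorem columnSteps_cons (A : List ι) (B : Finset ι) (cols : List (List ι × Finset ι)) :
    columnSteps x ((A, B) :: cols) =
      descent x A ++ (1, ∑ i ∈ B, (x i : ℤ)) :: columnSteps x cols := by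
  simp [columnSteps]

/-- The columns can be swept one after another when the down steps `R` are left over from earlier
columns: each right step uses up available indices, and none are left in the end. -/
def Sweepable : List ι → List (List ι × Finset ι) → Prop
  | R, [] => R = []
  | R, (A, B) :: cols =>
    (R ++ A).Nodup ∧ B ⊆ (R ++ A).toFinset ∧ Sweepable ((R ++ A).filter (· ∉ B)) cols

theorem downOrRight_of_mem_columnSteps (hx : ∀ i, 0 < x i) {cols : List (List ι × Finset ι)}
    {v : Pt} (hv : v ∈ columnSteps x cols) : DownOrRight v := by
  simp only [columnSteps, List.mem_flatMap, List.mem_append, List.mem_singleton] at hv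
  obtain ⟨p, -, hv | rfl⟩ := hv
  · obtain ⟨i, -, rfl⟩ : ∃ i ∈ p.1, downStep (x i) = v := by simpa [descent] using hv
    exact .inl ⟨rfl, by simpa [downStep] using hx i⟩
  · exact .inr ⟨one_pos, Finset.sum_nonneg fun i _ => Nat.cast_nonneg _⟩

theorem inside_rect_descent {p : Pt} (hp : p ∈ rect c d) (hR : ((R.map x).sum : ℤ) ≤ p.2) :
    Inside (rect c d) (pathFrom p (descent x R)) := by
  refine inside_rect_of_monotone (fun v hv => ?_) hp ?_
  · obtain ⟨i, -, rfl⟩ : ∃ i ∈ R, downStep (x i) = v := by simpa [descent] using hv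
    simp [downStep]
  · rw [sum_descent]
    simp only [rect, Set.mem_ofPred_eq, downStep, Prod.fst_add, Prod.snd_add] at hp ⊢
    lia

@[to_additive]
theorem prod_map_filter_notMem_mul_prod {M : Type*} [CommMonoid M] (f : ι → M) (hR : R.Nodup)
    {I : Finset ι} (hI : I ⊆ R.toFinset) :
    ((R.filter (· ∉ I)).map f).prod * ∏ i ∈ I, f i = (R.map f).prod := by
  rw [← List.prod_toFinset f hR, ← List.prod_toFinset f (hR.filter _), List.toFinset_filter]
  simpa [Finset.sdiff_eq_filter] using Finset.prod_sdiff (f := f) hI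

@[to_additive]
theorem Sweepable.prod_map_prod {M : Type*} [CommMonoid M] (f : ι → M)
    {cols : List (List ι × Finset ι)} (h : Sweepable R cols) :
    (cols.map fun p => ∏ i ∈ p.2, f i).prod = ((R ++ (cols.map Prod.fst).flatten).map f).prod := by
  induction cols generalizing R with
  | nil => simp [show R = [] from h]
  | cons p cols ih =>
    obtain ⟨A, B⟩ := p
    obtain ⟨hnodup, hB, h⟩ := h
    have hrest := prod_map_filter_notMem_mul_prod f hnodup hB
    rw [List.map_cons, List.prod_cons, ih h, List.map_append, List.prod_append, ← mul_assoc,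
      mul_comm (∏ i ∈ B, f i), hrest]
    simp [mul_assoc]

theorem Sweepable.inside [Fintype ι] (hxd : ∑ i, x i ≤ d) {cols : List (List ι × Finset ι)}
    (h : Sweepable R cols) (hk : k + cols.length = c) :
    Inside (rect c d)
      (pathFrom (k, d - ((R.map x).sum : ℤ)) (columnSteps x cols ++ [downStep d])) := by
  induction cols generalizing k R with
  | nil =>
    obtain rfl : k = c := hk
    obtain rfl : R = [] := h
    refine inside_rect_of_monotone ?_ ?_ ?_ <;> simp [columnSteps, downStep, rect]
  | cons p cols ih =>
    obtain ⟨A, B⟩ := p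
    obtain ⟨hnodup, hB, h⟩ := h
    have hRA : ((R ++ A).map x).sum ≤ d := by
      rw [← List.sum_toFinset x hnodup]
      exact (Finset.sum_le_sum_of_subset (Finset.subset_univ _)).trans hxd
    have hk' : k + 1 ≤ c := by
      rw [List.length_cons] at hk
      lia
    rw [List.map_append, List.sum_append] at hRA
    have hmem : ((k : ℤ), d - ((R.map x).sum : ℤ)) ∈ rect c d := by
      simp only [rect, Set.mem_ofPred_eq]
      lia
    have hrest := sum_map_filter_notMem_add_sum x hnodup hB
    rw [List.map_append, List.sum_append] at hrest
    rw [columnSteps_cons, List.append_assoc, inside_pathFrom_append, List.cons_append,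
      inside_pathFrom_cons, sum_descent]
    refine ⟨inside_rect_descent hmem (by lia), ?_, ?_⟩
    · simp only [rect, Set.mem_ofPred_eq, downStep, Prod.mk_add_mk]
      lia
    · convert ih h (k := k + 1) (by simpa [add_assoc, add_comm 1] using hk) using 2
      simp only [downStep, Prod.mk_add_mk, Prod.mk.injEq, ← Nat.cast_sum]
      lia

theorem Sweepable.inside_swept [Fintype ι] (hxd : ∑ i, x i ≤ d) {cols : List (List ι × Finset ι)}
    (h : Sweepable R cols) (hk : k + cols.length = c) :
    Inside (rect c d)
      (pathFrom (0, (d : ℤ)) (swept x k R (columnSteps x cols ++ [downStep d]))) := by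
  have hin := h.inside hxd hk
  have hend : (0, (d : ℤ)) + (List.replicate k ((1, 0) : Pt) ++ descent x R).sum =
      ((k : ℤ), d - ((R.map x).sum : ℤ)) := by
    rw [sum_prefix_swept]
    simp [sub_eq_add_neg]
  rw [swept, inside_pathFrom_append, hend]
  refine ⟨inside_rect_of_monotone (fun v hv => ?_) (by simp [rect]) (hend ▸ hin.start_mem), hin⟩
  simp only [descent, List.mem_append, List.mem_replicate, List.mem_map] at hv
  obtain ⟨-, rfl⟩ | ⟨m, -, rfl⟩ := hv <;> simp [downStep]

theorem Sweepable.plusMult_swept [Fintype ι] (hd : 0 < d) (hxd : ∑ i, x i ≤ d)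
    (hinj : Function.Injective fun J : Finset ι => ∑ i ∈ J, x i)
    {cols : List (List ι × Finset ι)} (h : Sweepable R cols) (hk : k + cols.length = c) :
    plusMult c d (swept x k R (columnSteps x cols ++ [downStep d])) =
      (cols.map fun p => ∏ i ∈ p.2, x i).prod := by
  induction cols generalizing k R with
  | nil =>
    obtain rfl : k = c := hk
    obtain rfl : R = [] := h
    simpa [swept, descent, columnSteps] using plusMult_init k d
  | cons p cols ih =>
    obtain ⟨A, B⟩ := p
    have hin := h.inside_swept hxd hk
    obtain ⟨hnodup, hB, h⟩ := h
    rw [columnSteps_cons, List.append_assoc, ← swept_append, List.cons_append]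
    rw [plusMult_sweep_of_injective hinj hnodup ?_ hB ?_, ih h]
    · simp
    · simpa [add_assoc, add_comm 1] using hk
    · simp only [List.mem_append, List.mem_singleton]
      rintro v (hv | rfl)
      · exact (downOrRight_of_mem_columnSteps (pos_of_injective_sum hinj) hv).lamLT_zero
      · exact .inr ⟨rfl, by simpa [downStep] using hd⟩
    · rwa [columnSteps_cons, List.append_assoc, ← swept_append, List.cons_append] at hin

end Sweep

/-! ### The multiplicity of `γ(A,B)` -/

section Columns

variable {ι : Type*} {x : ι → ℕ}

theorem verticals_columnSteps (x : ι → ℕ) (cols : List (List ι × Finset ι)) :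
    verticals (columnSteps x cols) = descent x (cols.map Prod.fst).flatten := by
  induction cols with
  | nil => rfl
  | cons p cols ih =>
    have hdescent : verticals (descent x p.1) = descent x p.1 := by
      simp [verticals, descent, downStep]
    rw [columnSteps_cons, verticals_append, hdescent, verticals_cons_of_ne one_ne_zero, ih]
    simp [descent]

theorem nonverticals_columnSteps (x : ι → ℕ) (cols : List (List ι × Finset ι)) :
    nonverticals (columnSteps x cols) = cols.map fun p => (1, ∑ i ∈ p.2, (x i : ℤ)) := by
  induction cols with
  | nil => rfl
  | cons p cols ih =>
    have hdescent : nonverticals (descent x p.1) = [] := by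
      simp [nonverticals, descent, downStep]
    rw [columnSteps_cons, nonverticals_append, hdescent, nonverticals_cons_of_ne one_ne_zero, ih]
    rfl

theorem sum_nonverticals_columnSteps (x : ι → ℕ) (cols : List (List ι × Finset ι)) :
    (nonverticals (columnSteps x cols)).sum =
      ((cols.length : ℤ), (cols.map fun p => ∑ i ∈ p.2, (x i : ℤ)).sum) := by
  rw [nonverticals_columnSteps]
  induction cols with
  | nil => rfl
  | cons p cols ih => simp [ih, add_comm]

variable [Fintype ι] {cols : List (List ι × Finset ι)}

theorem downStep_notMem_verticals_tail (hx : ∀ i, 0 < x i)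
    (hcols : (cols.map Prod.fst).flatten.Nodup) (hhead : ∀ p ∈ cols.head?, p.1 ≠ []) :
    downStep (∑ i, x i) ∉ verticals (columnSteps x cols).tail := by
  obtain _ | ⟨⟨A, B⟩, cols⟩ := cols
  · simp [columnSteps, verticals]
  obtain ⟨j, A, rfl⟩ := List.exists_cons_of_ne_nil (hhead (A, B) rfl)
  have htail : (columnSteps x ((j :: A, B) :: cols)).tail = columnSteps x ((A, B) :: cols) := by
    simp [columnSteps, descent]
  rw [htail, verticals_columnSteps]
  intro hmem
  rw [descent, List.mem_map_of_injective downStep_injective, List.mem_map] at hmem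
  obtain ⟨i, hi, hsum⟩ := hmem
  have hij : j ≠ i := fun h => (List.nodup_cons.mp hcols).1 (h ▸ hi)
  exact (Finset.single_lt_sum hij (Finset.mem_univ i) (Finset.mem_univ j) (hx j) (by simp)).ne hsum

theorem Sweepable.minusState (hx : ∀ i, 0 < x i) (h : Sweepable [] cols)
    (hcols : ((cols.map Prod.fst).flatten : Multiset ι) = (Finset.univ : Finset ι).val)
    (hhead : ∀ p ∈ cols.head?, p.1 ≠ []) :
    MinusState cols.length (∑ i, x i) (Finset.univ.val.map x) (columnSteps x cols)
      (downStep (∑ i, x i)) where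
  downOrRight _ := downOrRight_of_mem_columnSteps hx
  verticals_eq := by
    rw [verticals_columnSteps, descent, ← Multiset.map_coe, ← Multiset.map_coe, hcols]
  sum_eq := by
    rw [sum_nonverticals_columnSteps, h.sum_map_sum, List.nil_append, ← Multiset.sum_coe,
      ← Multiset.map_coe, hcols]
    simp [downStep]
  nonneg := le_rfl
  notMem_tail := downStep_notMem_verticals_tail hx
    (Multiset.coe_nodup.mp (hcols ▸ Finset.univ.nodup)) hhead
  inside := by simpa using h.inside le_rfl (k := 0) (zero_add _)

theorem Sweepable.multRect_eq [Nonempty ι]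
    (hinj : Function.Injective fun J : Finset ι => ∑ i ∈ J, x i) (h : Sweepable [] cols)
    (hcols : ((cols.map Prod.fst).flatten : Multiset ι) = (Finset.univ : Finset ι).val)
    (hhead : ∀ p ∈ cols.head?, p.1 ≠ []) :
    (multRect cols.length (∑ i, x i) {cols.length} (Multiset.replicate cols.length 1)
        (Finset.univ.val.map x) {∑ i, x i}
        (pathFrom (0, ((∑ i, x i : ℕ) : ℤ)) (columnSteps x cols ++ [downStep (∑ i, x i)])) : ℤ) =
      (∏ i, (x i : ℤ)) *
        nestedDet (cols.map fun p => (1, ∑ i ∈ p.2, (x i : ℤ))) (0, -∑ i, (x i : ℤ)) := by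
  have hx := pos_of_injective_sum hinj
  have hd : 0 < ∑ i, x i := Finset.sum_pos (fun i _ => hx i) Finset.univ_nonempty
  have hx_inj : Function.Injective x := fun i j hij => by
    simpa using hinj (a₁ := {i}) (a₂ := {j}) (by simpa using hij)
  have hprod : (cols.map fun p => ∏ i ∈ p.2, x i).prod = ∏ i, x i := by
    rw [h.prod_map_prod, List.nil_append, ← Multiset.prod_coe, ← Multiset.map_coe, hcols]
    rfl
  have hplus : plusMult cols.length (∑ i, x i) (columnSteps x cols ++ [downStep (∑ i, x i)]) =
      ∏ i, x i := by
    simpa [swept, descent, hprod] using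
      h.plusMult_swept hd le_rfl hinj (k := 0) (zero_add _)
  have hminus := (h.minusState hx hcols hhead).multMinusRect_eq
    (Finset.univ.nodup.map hx_inj) (d := ∑ i, x i) rfl
  rw [nonverticals_columnSteps] at hminus
  rw [multRect, Nat.cast_mul, hminus, ← plusMult, hplus]
  simp [downStep]

end Columns

section Admissible

theorem sweepable_ofFn {ι : Type*} {c : ℕ} {R : List ι} {A : Fin c → List ι} {B : Fin c → Finset ι}
    (hnodup : (R ++ (List.ofFn A).flatten).Nodup)
    (hsub : ∀ k, ∀ i ∈ B k, i ∈ R ∨ ∃ j ≤ k, i ∈ A j)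
    (hdisj : ∀ j k, j < k → Disjoint (B j) (B k))
    (hcover : ∀ i ∈ R ++ (List.ofFn A).flatten, ∃ k, i ∈ B k) :
    Sweepable R (List.ofFn fun k => (A k, B k)) := by
  induction c generalizing R with
  | zero => simpa [Sweepable, List.eq_nil_iff_forall_not_mem] using hcover
  | succ c ih =>
    simp only [List.ofFn_succ, List.flatten_cons, ← List.append_assoc] at hnodup hcover ⊢
    have hB : B 0 ⊆ (R ++ A 0).toFinset := fun i hi => by
      obtain hR | ⟨j, hj, hA⟩ := hsub 0 i hi
      · simp [hR]
      · simp [Fin.le_zero_iff.mp hj ▸ hA]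
    have hnotMem : ∀ i ∈ (List.ofFn fun k => A k.succ).flatten, i ∉ B 0 := fun i hi hiB =>
      List.disjoint_of_nodup_append hnodup (List.mem_toFinset.mp (hB hiB)) hi
    refine ⟨hnodup.of_append_left, hB, ih ?_ ?_ (fun j k hjk => hdisj _ _ (by simpa using hjk)) ?_⟩
    · exact hnodup.sublist (List.filter_sublist.append_right _)
    · intro k i hi
      have hiB : i ∉ B 0 := Finset.disjoint_right.mp (hdisj 0 k.succ k.succ_pos) hi
      obtain hR | ⟨j, hj, hA⟩ := hsub k.succ i hi
      · exact .inl (by simp [hR, hiB])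
      · cases j using Fin.cases with
        | zero => exact .inl (by simp [hA, hiB])
        | succ j => exact .inr ⟨j, by simpa using hj, hA⟩
    · intro i hi
      have hi' : i ∈ R ++ A 0 ++ (List.ofFn fun k => A k.succ).flatten ∧ i ∉ B 0 := by
        obtain hi | hi := List.mem_append.mp hi
        · obtain ⟨hi, hiB⟩ := List.mem_filter.mp hi
          exact ⟨List.mem_append_left _ hi, by simpa using hiB⟩
        · exact ⟨List.mem_append_right _ hi, hnotMem i hi⟩
      obtain ⟨k, hk⟩ := hcover i hi'.1
      cases k using Fin.cases with
      | zero => exact absurd hk hi'.2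
      | succ k => exact ⟨k, hk⟩

variable {c n : ℕ} {A : Fin c → List (Fin n)} {B : Fin c → Finset (Fin n)}

theorem IsAdmissible.sweepable (h : IsAdmissible A B) :
    Sweepable [] (List.ofFn fun k => (A k, B k)) := by
  obtain ⟨hA, hB, -, hsub⟩ := h
  refine sweepable_ofFn ?_ (fun k i hi => ?_) (fun j k hjk => ?_) fun i _ => (hB i).exists
  · exact Multiset.coe_nodup.mp (hA ▸ Finset.univ.nodup)
  · simpa using (Finset.mem_sdiff.mp (hsub k hi)).1
  · refine Finset.disjoint_left.mpr fun i hij hik => hjk.ne ((hB i).unique hij hik)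

theorem IsAdmissible.head_ne_nil (h : IsAdmissible A B) :
    ∀ p ∈ (List.ofFn fun k => (A k, B k)).head?, p.1 ≠ [] := by
  obtain ⟨-, -, hB, hsub⟩ := h
  obtain _ | c := c
  · simp
  obtain ⟨i, hi⟩ := hB 0 rfl
  have hiA : i ∈ A 0 := by simpa using (Finset.mem_sdiff.mp (hsub 0 hi)).1
  simpa [List.ofFn_succ] using List.ne_nil_of_mem hiA

theorem gammaAB_eq_pathFrom (x : Fin n → ℕ) (A : Fin c → List (Fin n))
    (B : Fin c → Finset (Fin n)) :
    gammaAB x A B = pathFrom (0, ((∑ i, x i : ℕ) : ℤ))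
      (columnSteps x (List.ofFn fun k => (A k, B k)) ++ [downStep (∑ i, x i)]) := by
  have hcol : colSteps x A B = fun k => descent x (A k) ++ [(1, ∑ i ∈ B k, (x i : ℤ))] := by
    funext k
    simp [colSteps, descent, downStep]
  simp [gammaAB, columnSteps, hcol, List.flatMap_def, List.map_ofFn, Function.comp_def, downStep]

theorem IsAdmissible.multRect_gammaAB [NeZero n] (h : IsAdmissible A B) {x : Fin n → ℕ}
    (hgen : Generic x) :
    (multRect c (∑ i, x i) {c} (Multiset.replicate c 1) (List.ofFn x : List ℕ) {∑ i, x i}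
        (gammaAB x A B) : ℤ) =
      (∏ i, (x i : ℤ)) *
        nestedDet (List.ofFn fun k => (1, ∑ i ∈ B k, (x i : ℤ))) (0, -∑ i, (x i : ℤ)) := by
  have hinj : Function.Injective fun J : Finset (Fin n) => ∑ i ∈ J, x i := fun I J =>
    not_imp_not.mp (hgen I J)
  have hmult := h.sweepable.multRect_eq hinj
    (by simpa [List.map_ofFn, Function.comp_def] using h.1) h.head_ne_nil
  rw [gammaAB_eq_pathFrom]
  simpa [List.map_ofFn, Function.comp_def, Fin.univ_val_map] using hmult

end Admissible

/-- For every admissible pair `(A,B)` there is a polynomial in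
`ℤ[X₁,…,Xₙ]` computing `mult(γ(A,B))` for all generic positive `x₁,…,xₙ`. -/
theorem mult_gammaAB_polynomial (c n : ℕ) (hc : 0 < c) (hn : 0 < n)
    (A : Fin c → List (Fin n)) (B : Fin c → Finset (Fin n)) (hAB : IsAdmissible A B) :
    ∃ P : MvPolynomial (Fin n) ℤ,
      ∀ x : Fin n → ℕ, (∀ i, 0 < x i) → Generic x →
        ((multRect c (∑ i, x i) {c} (Multiset.replicate c 1)
            ((List.ofFn x : List ℕ) : Multiset ℕ) {∑ i, x i} (gammaAB x A B) : ℕ) : ℤ)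
          = MvPolynomial.eval (fun i => (x i : ℤ)) P := by
  have : NeZero n := ⟨hn.ne'⟩
  refine ⟨(∏ i, .X i) * nestedDet (List.ofFn fun k => (1, ∑ i ∈ B k, .X i)) (0, -∑ i, .X i),
    fun x _ hgen => ?_⟩
  rw [hAB.multRect_gammaAB hgen, map_mul, ← nestedDet_map]
  simp [List.map_ofFn, Function.comp_def]

end TropPaths
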